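/- arXiv:2404.06428 — 4 statements merged into one kernel-verified Lean document; each statement's English description precedes it below -/
import Mathlib

section
/- Let (M,D) be a σ-compact, locally compact metric space whose metric D is intrinsic. Then there exists a metric D̂ on M such that (i) D̂ induces the same topology on M as D, (ii) D̂ is intrinsic, (iii) (M,D̂) is a proper metric space, and (iv) for every compact subset K ⊆ M there exist constants 0 < c ≤ C such that c·D(x,y) ≤ D̂(x,y) ≤ C·D(x,y) for all x,y ∈ K (i.e., D̂ lies in the local bi-Lipschitz class of D). -/
open scoped ENNReal

/-- The length of a curve `c : [a, b] → M` measured with a generalized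
(extended-real-valued) distance function `ρ`: the supremum, over all partitions
`a = t 0 ≤ t 1 ≤ … ≤ t n = b`, of `∑ ρ (c (t i)) (c (t (i+1)))`. -/
noncomputable def lengthWith {M : Type*} (ρ : M → M → ℝ≥0∞)
    (c : ℝ → M) (a b : ℝ) : ℝ≥0∞ :=
  ⨆ (n : ℕ) (t : Fin (n + 1) → ℝ) (_ : Monotone t) (_ : t 0 = a)
    (_ : t (Fin.last n) = b),
    ∑ i : Fin n, ρ (c (t i.castSucc)) (c (t i.succ))

/-- The infimum of the `ρ`-lengths of continuous curves from `x` to `y`. -/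
noncomputable def pathDistWith {M : Type*} [MetricSpace M] (ρ : M → M → ℝ≥0∞)
    (x y : M) : ℝ≥0∞ :=
  ⨅ (a : ℝ) (b : ℝ) (c : ℝ → M) (_ : a ≤ b) (_ : ContinuousOn c (Set.Icc a b))
    (_ : c a = x) (_ : c b = y), lengthWith ρ c a b

/-- A (generalized) distance function `ρ` on a metric space is intrinsic iff the
distance of any two points is the infimum of the `ρ`-lengths of the continuous
curves joining them. -/
def IsIntrinsic {M : Type*} [MetricSpace M] (ρ : M → M → ℝ≥0∞) : Prop :=
  ∀ x y, ρ x y = pathDistWith ρ x y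

section IntrinsicHelpers

open Set Metric

universe u

variable {M : Type*}

/-- A partition is extended to a monotone sequence indexed by `ℕ`. -/
theorem exists_nat_extension {n : ℕ} {t : Fin (n + 1) → ℝ} (ht : Monotone t) :
    ∃ u : ℕ → ℝ, Monotone u ∧ (∀ i : Fin (n + 1), u i = t i) := by
  refine ⟨fun i => t ⟨min i n, by omega⟩, fun i j hij => ht ?_, fun i => ?_⟩
  · simp only [Fin.mk_le_mk]; omega
  · simp only
    congr 1
    ext
    simp only
    omega

theorem lengthWith_eq_eVariationOn {E : Type*} [PseudoEMetricSpace E] (F : M → E)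
    (ρ : M → M → ℝ≥0∞) (hρ : ∀ x y, ρ x y = edist (F x) (F y)) (c : ℝ → M) {a b : ℝ}
    (_hab : a ≤ b) :
    lengthWith ρ c a b = eVariationOn (F ∘ c) (Icc a b) := by
  apply le_antisymm
  · unfold lengthWith
    refine iSup_le fun n => iSup_le fun t => iSup_le fun ht => iSup_le fun h0 => iSup_le fun h1 => ?_
    obtain ⟨u, hu, hut⟩ := exists_nat_extension ht
    have e0 : u 0 = a := by rw [← h0]; exact hut 0
    have e1 : u n = b := by rw [← h1]; simpa using hut (Fin.last n)
    have : ∑ i : Fin n, ρ (c (t i.castSucc)) (c (t i.succ))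
        = ∑ i ∈ Finset.range n, edist ((F ∘ c) (u (i + 1))) ((F ∘ c) (u i)) := by
      rw [← Fin.sum_univ_eq_sum_range (fun i => edist ((F ∘ c) (u (i + 1))) ((F ∘ c) (u i)))]
      refine Finset.sum_congr rfl fun i _ => ?_
      rw [hρ, edist_comm, ← hut i.castSucc, ← hut i.succ]
      simp
    rw [this]
    refine eVariationOn.sum_le_of_monotoneOn_Iic (hu.monotoneOn _) fun i hi => ⟨?_, ?_⟩
    · rw [← e0]; exact hu (Nat.zero_le _)
    · rw [← e1]; exact hu hi
  · unfold eVariationOn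
    refine iSup_le ?_
    rintro ⟨n, u, hu, us⟩
    simp only
    let v : ℕ → ℝ := fun i => if i = 0 then a else if i ≤ n + 1 then u (i - 1) else b
    have hv : Monotone v := by
      refine monotone_nat_of_le_succ fun i => ?_
      simp only [v]
      by_cases h0 : i = 0
      · subst h0
        simp [(us 0).1]
      · by_cases h1 : i + 1 ≤ n + 1
        · simp only [h0, h1, if_true, if_false, Nat.succ_ne_zero, show i ≤ n + 1 by omega]
          exact hu (by omega)
        · by_cases h2 : i ≤ n + 1
          · simp only [h0, h1, h2, if_true, if_false, Nat.succ_ne_zero]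
            exact (us _).2
          · simp [h0, h1, h2]
    unfold lengthWith
    refine le_iSup_of_le (n + 2) (le_iSup_of_le (fun i => v i) (le_iSup_of_le
      (fun i j hij => hv hij) (le_iSup_of_le (by simp [v]) (le_iSup_of_le (by simp [v]) ?_))))
    have key : ∑ i : Fin (n + 2), ρ (c (v (i.castSucc : Fin (n + 3)))) (c (v (i.succ : Fin (n + 3))))
        = ∑ i ∈ Finset.range (n + 2), edist ((F ∘ c) (v (i + 1))) ((F ∘ c) (v i)) := by
      rw [← Fin.sum_univ_eq_sum_range (fun i => edist ((F ∘ c) (v (i + 1))) ((F ∘ c) (v i)))]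
      refine Finset.sum_congr rfl fun i _ => ?_
      rw [hρ, edist_comm]
      simp
    refine le_trans ?_ key.symm.le
    rw [Finset.sum_range_succ']
    refine le_trans ?_ le_self_add
    rw [Finset.sum_range_succ]
    refine le_trans (Finset.sum_le_sum fun i hi => ?_) le_self_add
    rw [Finset.mem_range] at hi
    simp only [v, Nat.succ_ne_zero, if_false, show i + 1 + 1 ≤ n + 1 by omega,
      show i + 1 ≤ n + 1 by omega, if_true, Nat.add_sub_cancel]
    exact le_rfl

theorem le_lengthWith (ρ : M → M → ℝ≥0∞) (c : ℝ → M) {a b : ℝ} (hab : a ≤ b) :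
    ρ (c a) (c b) ≤ lengthWith ρ c a b := by
  unfold lengthWith
  refine le_iSup_of_le 1 (le_iSup_of_le ![a, b] (le_iSup_of_le ?_ (le_iSup_of_le (by simp)
    (le_iSup_of_le (by simp [Fin.last]) (by simp)))))
  rw [Fin.monotone_iff_le_succ]
  intro i
  fin_cases i
  simpa using hab

/-- Comparison of lengths for two distance functions comparable along the curve. -/
theorem lengthWith_le_mul (ρ σ : M → M → ℝ≥0∞) (C : ℝ≥0∞) (c : ℝ → M) {a b : ℝ}
    (h : ∀ s ∈ Icc a b, ∀ t ∈ Icc a b, ρ (c s) (c t) ≤ C * σ (c s) (c t)) :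
    lengthWith ρ c a b ≤ C * lengthWith σ c a b := by
  conv_lhs => unfold lengthWith
  refine iSup_le fun n => iSup_le fun t => iSup_le fun ht => iSup_le fun h0 => iSup_le fun h1 => ?_
  have hm : ∀ i, t i ∈ Icc a b := fun i =>
    ⟨h0 ▸ ht (Fin.zero_le i), h1 ▸ ht (Fin.le_last i)⟩
  calc ∑ i : Fin n, ρ (c (t i.castSucc)) (c (t i.succ))
      ≤ ∑ i : Fin n, C * σ (c (t i.castSucc)) (c (t i.succ)) :=
        Finset.sum_le_sum fun i _ => h _ (hm _) _ (hm _)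
    _ = C * ∑ i : Fin n, σ (c (t i.castSucc)) (c (t i.succ)) := by rw [Finset.mul_sum]
    _ ≤ C * lengthWith σ c a b := by
        gcongr
        unfold lengthWith
        exact le_iSup_of_le n (le_iSup_of_le t (le_iSup_of_le ht (le_iSup_of_le h0
          (le_iSup_of_le h1 le_rfl))))

variable [MetricSpace M]

theorem pathDistWith_le (ρ : M → M → ℝ≥0∞) {a b : ℝ} {c : ℝ → M} (hab : a ≤ b)
    (hc : ContinuousOn c (Icc a b)) : pathDistWith ρ (c a) (c b) ≤ lengthWith ρ c a b :=
  iInf_le_of_le a (iInf_le_of_le b (iInf_le_of_le c (iInf_le_of_le hab (iInf_le_of_le hc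
    (iInf_le_of_le rfl (iInf_le_of_le rfl le_rfl))))))

theorem exists_curve_of_pathDistWith_lt {ρ : M → M → ℝ≥0∞} {x y : M} {L : ℝ≥0∞}
    (h : pathDistWith ρ x y < L) :
    ∃ (a b : ℝ) (c : ℝ → M), a ≤ b ∧ ContinuousOn c (Icc a b) ∧ c a = x ∧ c b = y ∧
      lengthWith ρ c a b < L := by
  unfold pathDistWith at h
  simp only [iInf_lt_iff] at h
  obtain ⟨a, b, c, h1, h2, h3, h4, h5⟩ := h
  exact ⟨a, b, c, h1, h2, h3, h4, h5⟩

theorem le_pathDistWith {ρ : M → M → ℝ≥0∞} (x y : M) {L : ℝ≥0∞}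
    (h : ∀ (a b : ℝ) (c : ℝ → M), a ≤ b → ContinuousOn c (Icc a b) → c a = x → c b = y →
      L ≤ lengthWith ρ c a b) : L ≤ pathDistWith ρ x y :=
  le_iInf fun a => le_iInf fun b => le_iInf fun c => le_iInf fun h1 => le_iInf fun h2 =>
    le_iInf fun h3 => le_iInf fun h4 => h a b c h1 h2 h3 h4

theorem le_pathDistWith_self (ρ : M → M → ℝ≥0∞) (x y : M) : ρ x y ≤ pathDistWith ρ x y := by
  refine le_pathDistWith x y fun a b c hab _ ha hb => ?_
  rw [← ha, ← hb]
  exact le_lengthWith ρ c hab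

section PE
variable {E : Type*} [PseudoEMetricSpace E] (F : M → E)
    (ρ : M → M → ℝ≥0∞)

theorem pathDistWith_self (hρ : ∀ x y, ρ x y = edist (F x) (F y))
    (x : M) : pathDistWith ρ x x = 0 := by
  refine le_antisymm ((pathDistWith_le ρ (le_refl (0 : ℝ)) (c := fun _ => x)
    continuousOn_const).trans ?_) bot_le
  rw [lengthWith_eq_eVariationOn F ρ hρ _ le_rfl]
  exact (eVariationOn.subsingleton _ (by simp)).le

theorem pathDistWith_comm_le (hρ : ∀ x y, ρ x y = edist (F x) (F y))
    (x y : M) : pathDistWith ρ y x ≤ pathDistWith ρ x y := by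
  refine le_pathDistWith x y fun a b c hab hc ha hb => ?_
  have hm : MapsTo (fun t : ℝ => -t) (Icc (-b) (-a)) (Icc a b) := fun t ht =>
    ⟨by linarith [ht.2], by linarith [ht.1]⟩
  have h := pathDistWith_le ρ (a := -b) (b := -a) (c := fun t => c (-t)) (by linarith)
    (hc.comp continuous_neg.continuousOn hm)
  simp only [neg_neg, ha, hb] at h
  refine h.trans ?_
  rw [lengthWith_eq_eVariationOn F ρ hρ _ hab, lengthWith_eq_eVariationOn F ρ hρ _ (by linarith)]
  exact eVariationOn.comp_le_of_antitoneOn (F ∘ c) (fun t : ℝ => -t)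
    (fun s _ t _ hst => neg_le_neg hst) hm

theorem pathDistWith_comm (hρ : ∀ x y, ρ x y = edist (F x) (F y))
    (x y : M) : pathDistWith ρ x y = pathDistWith ρ y x :=
  le_antisymm (pathDistWith_comm_le F ρ hρ y x) (pathDistWith_comm_le F ρ hρ x y)

theorem pathDistWith_triangle (hρ : ∀ x y, ρ x y = edist (F x) (F y))
    (x y z : M) :
    pathDistWith ρ x z ≤ pathDistWith ρ x y + pathDistWith ρ y z := by
  refine ENNReal.le_of_forall_pos_le_add fun ε hε hfin => ?_
  have hε2 : (ε : ℝ≥0∞) / 2 ≠ 0 := (ENNReal.half_pos (by exact_mod_cast hε.ne')).ne'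
  obtain ⟨f1, f2⟩ := ENNReal.add_lt_top.1 hfin
  have h1 : pathDistWith ρ x y < pathDistWith ρ x y + ε / 2 := ENNReal.lt_add_right f1.ne hε2
  have h2 : pathDistWith ρ y z < pathDistWith ρ y z + ε / 2 := ENNReal.lt_add_right f2.ne hε2
  have hL12 : (pathDistWith ρ x y + ε / 2) + (pathDistWith ρ y z + ε / 2)
      = pathDistWith ρ x y + pathDistWith ρ y z + ε := by
    conv_rhs => rw [← ENNReal.add_halves (ε : ℝ≥0∞)]
    ring
  obtain ⟨a, b, c, hab, hc, ha, hb, hl⟩ := exists_curve_of_pathDistWith_lt h1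
  obtain ⟨a', b', c', hab', hc', ha', hb', hl'⟩ := exists_curve_of_pathDistWith_lt h2
  let e := b + (b' - a')
  let d : ℝ → M := fun t => if t ≤ b then c t else c' (t - b + a')
  have hbe : b ≤ e := by simp only [e]; linarith
  have d1 : EqOn d c (Icc a b) := fun t ht => by simp [d, ht.2]
  have d2 : EqOn d (fun t => c' (t - b + a')) (Icc b e) := fun t ht => by
    rcases ht.1.eq_or_lt with h | h
    · subst h
      simp [d, hb, ha']
    · simp [d, not_le.2 h]
  have hm : MapsTo (fun t : ℝ => t - b + a') (Icc b e) (Icc a' b') := fun t ht =>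
    ⟨by linarith [ht.1], by have := ht.2; simp only [e] at this; linarith⟩
  have hd : ContinuousOn d (Icc a e) := by
    rw [← Icc_union_Icc_eq_Icc hab hbe]
    refine ContinuousOn.union_of_isClosed (hc.congr d1) ?_ isClosed_Icc isClosed_Icc
    refine ContinuousOn.congr ?_ d2
    exact hc'.comp (by fun_prop) hm
  have h := pathDistWith_le ρ (hab.trans hbe) hd
  have hx : d a = x := by rw [d1 ⟨le_rfl, hab⟩, ha]
  have hz : d e = z := by rw [d2 ⟨hbe, le_rfl⟩]; simp [e, hb']
  rw [hx, hz] at h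
  refine h.trans (le_trans ?_ hL12.le)
  refine le_trans ?_ (add_le_add hl.le hl'.le)
  rw [lengthWith_eq_eVariationOn F ρ hρ _ hab, lengthWith_eq_eVariationOn F ρ hρ _ hab',
    lengthWith_eq_eVariationOn F ρ hρ _ (hab.trans hbe)]
  have := eVariationOn.Icc_add_Icc (F ∘ d) (s := univ) hab hbe (mem_univ _)
  simp only [univ_inter] at this
  rw [← this]
  refine add_le_add (eVariationOn.congr fun t ht => by simp [d1 ht]).le ?_
  rw [eVariationOn.congr (g := (F ∘ c') ∘ fun t => t - b + a') fun t ht => by simp [d2 ht]]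
  exact eVariationOn.comp_le_of_monotoneOn _ _ (fun s _ t _ hst => by linarith) hm

/-- The length for the induced path distance is at most the original length. -/
theorem lengthWith_pathDistWith_le (hρ : ∀ x y, ρ x y = edist (F x) (F y))
    {a b : ℝ} {c : ℝ → M} (hab : a ≤ b)
    (hc : ContinuousOn c (Icc a b)) :
    lengthWith (pathDistWith ρ) c a b ≤ lengthWith ρ c a b := by
  conv_lhs => unfold lengthWith
  refine iSup_le fun n => iSup_le fun t => iSup_le fun ht => iSup_le fun h0 => iSup_le fun h1 => ?_
  obtain ⟨u, hu, hut⟩ := exists_nat_extension ht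
  have e0 : u 0 = a := by rw [← h0]; exact hut 0
  have e1 : u n = b := by rw [← h1]; simpa using hut (Fin.last n)
  have hs := eVariationOn.sum' (F ∘ c) hu (n := n)
  rw [e0, e1] at hs
  rw [lengthWith_eq_eVariationOn F ρ hρ _ hab, ← hs,
    ← Fin.sum_univ_eq_sum_range (fun i => eVariationOn (F ∘ c) (Icc (u i) (u (i + 1))))]
  refine Finset.sum_le_sum fun i _ => ?_
  have hle : u i ≤ u (i + 1) := hu (Nat.le_succ _)
  rw [← hut i.castSucc, ← hut i.succ]
  simp only [Fin.val_castSucc, Fin.val_succ]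
  rw [← lengthWith_eq_eVariationOn F ρ hρ _ hle]
  refine pathDistWith_le ρ hle (hc.mono (Icc_subset_Icc ?_ ?_))
  · rw [← e0]; exact hu (Nat.zero_le _)
  · rw [← e1]; exact hu i.2

theorem isIntrinsic_pathDistWith (hρ : ∀ x y, ρ x y = edist (F x) (F y))
    : IsIntrinsic (pathDistWith ρ) := by
  intro x y
  apply le_antisymm (le_pathDistWith_self _ x y)
  refine le_pathDistWith x y fun a b c hab hc ha hb => ?_
  rw [← ha, ← hb]
  exact (pathDistWith_le _ hab hc).trans (lengthWith_pathDistWith_le F ρ hρ hab hc)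

end PE

/-- Realize an abstract extended distance function by a pseudo-emetric space. -/
theorem exists_pseudoEMetric {M : Type u} (d : M → M → ℝ≥0∞) (h0 : ∀ x, d x x = 0)
    (hc : ∀ x y, d x y = d y x) (ht : ∀ x y z, d x z ≤ d x y + d y z) :
    ∃ (E : Type u) (_ : PseudoEMetricSpace E) (F : M → E), ∀ x y, edist (F x) (F y) = d x y :=
  ⟨M, { edist := d, edist_self := h0, edist_comm := hc, edist_triangle := ht }, id,
    fun _ _ => rfl⟩

/-- Realize an abstract distance function by a pseudo-metric space. -/
theorem exists_pseudoMetric {M : Type u} (d : M → M → ℝ) (h0 : ∀ x, d x x = 0)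
    (hc : ∀ x y, d x y = d y x) (ht : ∀ x y z, d x z ≤ d x y + d y z) :
    ∃ (E : Type u) (_ : PseudoMetricSpace E) (F : M → E), ∀ x y, dist (F x) (F y) = d x y :=
  ⟨M, { dist := d, dist_self := h0, dist_comm := hc, dist_triangle := ht }, id,
    fun _ _ => rfl⟩

/-- The auxiliary distance. -/
theorem exists_aux_distance (M : Type u) [MetricSpace M] [SigmaCompactSpace M] [LocallyCompactSpace M] :
    ∃ (K : CompactExhaustion M) (E : Type u) (_ : PseudoEMetricSpace E) (F : M → E),
      (∀ x y, edist x y ≤ edist (F x) (F y)) ∧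
      (∀ n, ∃ C : NNReal, ∀ x ∈ K n, ∀ y ∈ K n, edist (F x) (F y) ≤ C * edist x y) ∧
      (∀ x : M, ∀ r : ℝ, ∃ n, ∀ y, edist (F x) (F y) ≤ ENNReal.ofReal r → y ∈ K n) := by
  let K : CompactExhaustion M := default
  have h : ∀ n, ∃ δ : ℝ, 0 < δ ∧ thickening δ (K n) ⊆ interior (K (n + 1)) := fun n =>
    (K.isCompact n).exists_thickening_subset_open isOpen_interior (K.subset_interior_succ n)
  choose δ hδ hsub using h
  let φ : ℕ → M → NNReal := fun n => thickenedIndicator (hδ n) (K n)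
  have φ1 : ∀ n, ∀ x ∈ K n, φ n x = 1 := fun n x hx => thickenedIndicator_one _ _ hx
  have φ0 : ∀ n, ∀ x, x ∉ K (n + 1) → φ n x = 0 := fun n x hx =>
    thickenedIndicator_zero _ _ fun h => hx (interior_subset (hsub n h))
  obtain ⟨E, instE, F, hF⟩ := exists_pseudoEMetric
    (fun x y : M => edist x y + ∑' n, edist (φ n x) (φ n y))
      (fun x => by simp)
      (fun x y => by simp only [edist_comm])
      (fun x y z => by
        calc edist x z + ∑' n, edist (φ n x) (φ n z)
            ≤ (edist x y + edist y z) +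
              ∑' n, (edist (φ n x) (φ n y) + edist (φ n y) (φ n z)) :=
              add_le_add (edist_triangle _ _ _)
                (ENNReal.tsum_le_tsum fun n => edist_triangle _ _ _)
          _ = _ := by rw [ENNReal.tsum_add]; ring)
  refine ⟨K, E, instE, F, fun x y => (hF x y) ▸ le_self_add, fun n => ?_, fun x r => ?_⟩
  · refine ⟨1 + ∑ i ∈ Finset.range n, (δ i).toNNReal⁻¹, fun x hx y hy => ?_⟩
    rw [hF]
    rw [tsum_eq_sum (s := Finset.range n) (fun i hi => by
      rw [Finset.mem_range, not_lt] at hi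
      rw [φ1 i x (K.subset hi hx), φ1 i y (K.subset hi hy), edist_self])]
    push_cast
    rw [add_mul, one_mul, Finset.sum_mul]
    gcongr with i _
    exact lipschitzWith_thickenedIndicator (hδ i) (K i) x y
  · obtain ⟨p, hp⟩ := K.exists_mem x
    obtain ⟨N, hN⟩ := exists_nat_gt r
    refine ⟨p + N + 1, fun y hy => ?_⟩
    by_contra hy'
    rw [hF] at hy
    have : (N + 1 : ℕ) ≤ ∑' i, edist (φ i x) (φ i y) := by
      calc ((N + 1 : ℕ) : ℝ≥0∞) = ∑ i ∈ Finset.Ico p (p + N + 1), (1 : ℝ≥0∞) := by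
            simp [add_assoc]
        _ ≤ ∑ i ∈ Finset.Ico p (p + N + 1), edist (φ i x) (φ i y) := by
            refine Finset.sum_le_sum fun i hi => ?_
            rw [Finset.mem_Ico] at hi
            rw [φ1 i x (K.subset hi.1 hp), φ0 i y fun h => hy' (K.subset (by omega) h)]
            simp [edist_nndist, NNReal.nndist_eq]
        _ ≤ _ := ENNReal.sum_le_tsum _
    have h2 := (this.trans le_add_self).trans hy
    have h3 : ENNReal.ofReal r < (N + 1 : ℕ) := by
      rw [← ENNReal.ofReal_natCast]
      exact (ENNReal.ofReal_lt_ofReal_iff (by positivity)).2 (by push_cast; linarith)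
    exact absurd h2 (not_le.2 h3)

end IntrinsicHelpers

/-- **Theorem 2 of the paper.**  Every σ-compact, locally compact metric space
`(M, D)` with `D` intrinsic carries a metric `D̂` inducing the same topology
which is intrinsic, proper (closed balls are compact), and lies in the local
bi-Lipschitz class of `D`. -/
theorem exists_proper_intrinsic_metric_in_local_lipschitz_class
    {M : Type*} [MetricSpace M] [SigmaCompactSpace M] [LocallyCompactSpace M]
    (hintr : IsIntrinsic (fun x y : M => edist x y)) :
    ∃ D' : M → M → ℝ,
      -- `D'` is a metric on `M`
      (∀ x y : M, 0 ≤ D' x y) ∧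
      (∀ x y : M, D' x y = 0 ↔ x = y) ∧
      (∀ x y : M, D' x y = D' y x) ∧
      (∀ x y z : M, D' x z ≤ D' x y + D' y z) ∧
      -- (i) `D'` induces the same topology on `M` as `D`
      (∀ s : Set M, IsOpen s ↔ ∀ x ∈ s, ∃ ε : ℝ, 0 < ε ∧ ∀ y, D' x y < ε → y ∈ s) ∧
      -- (ii) `D'` is intrinsic
      IsIntrinsic (fun x y : M => ENNReal.ofReal (D' x y)) ∧
      -- (iii) `(M, D')` is proper: all closed balls are compact
      (∀ (x : M) (r : ℝ), IsCompact {y : M | D' x y ≤ r}) ∧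
      -- (iv) `D'` lies in the local bi-Lipschitz class of `D`
      (∀ K : Set M, IsCompact K → ∃ c C : ℝ, 0 < c ∧ c ≤ C ∧
        ∀ x ∈ K, ∀ y ∈ K, c * dist x y ≤ D' x y ∧ D' x y ≤ C * dist x y) := by
  classical
  obtain ⟨K, E, instE, F, hle, hlip, hprop⟩ := exists_aux_distance M
  let ρ : M → M → ℝ≥0∞ := fun x y => edist (F x) (F y)
  have hρ : ∀ x y, ρ x y = edist (F x) (F y) := fun _ _ => rfl
  -- the path distance is finite
  have hfin : ∀ x y, pathDistWith ρ x y ≠ ⊤ := by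
    intro x y
    have h : pathDistWith (fun x y : M => edist x y) x y < ⊤ := by
      rw [← hintr x y]
      exact edist_lt_top x y
    obtain ⟨a, b, c, hab, hc, ha, hb, hl⟩ := exists_curve_of_pathDistWith_lt h
    obtain ⟨n, hn⟩ := K.exists_superset_of_isCompact (isCompact_Icc.image_of_continuousOn hc)
    obtain ⟨C, hC⟩ := hlip n
    have h1 := lengthWith_le_mul ρ (fun x y : M => edist x y) C c (a := a) (b := b)
      fun s hs t ht => hC _ (hn ⟨s, hs, rfl⟩) _ (hn ⟨t, ht, rfl⟩)
    have h2 := pathDistWith_le ρ hab hc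
    rw [ha, hb] at h2
    exact ((h2.trans h1).trans_lt (ENNReal.mul_lt_top ENNReal.coe_lt_top hl)).ne
  let D' : M → M → ℝ := fun x y => (pathDistWith ρ x y).toReal
  have hD' : ∀ x y, ENNReal.ofReal (D' x y) = pathDistWith ρ x y := fun x y =>
    ENNReal.ofReal_toReal (hfin x y)
  have hself : ∀ x, D' x x = 0 := fun x => by
    simp only [D', pathDistWith_self F ρ hρ, ENNReal.toReal_zero]
  have hcomm : ∀ x y, D' x y = D' y x := fun x y => by
    simp only [D', pathDistWith_comm F ρ hρ x y]
  have htri : ∀ x y z, D' x z ≤ D' x y + D' y z := fun x y z => by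
    simp only [D']
    rw [← ENNReal.toReal_add (hfin x y) (hfin y z)]
    exact ENNReal.toReal_mono (ENNReal.add_ne_top.2 ⟨hfin x y, hfin y z⟩)
      (pathDistWith_triangle F ρ hρ x y z)
  have hdist : ∀ x y, dist x y ≤ D' x y := fun x y => by
    rw [dist_edist]
    exact ENNReal.toReal_mono (hfin x y) ((hle x y).trans (le_pathDistWith_self ρ x y))
  have hnn : ∀ x y, 0 ≤ D' x y := fun x y => ENNReal.toReal_nonneg
  -- local Lipschitz estimate
  have hloc : ∀ x : M, ∃ r : ℝ, 0 < r ∧ ∃ C : NNReal, ∀ y ∈ Metric.ball x r,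
      ∀ z ∈ Metric.ball x r, D' y z ≤ C * dist y z := by
    intro x
    obtain ⟨n, hn⟩ := K.exists_mem_nhds x
    obtain ⟨C, hC⟩ := hlip n
    obtain ⟨R, hR, hRn⟩ := Metric.mem_nhds_iff.1 hn
    refine ⟨R / 3, by positivity, C, fun y hy z hz => ?_⟩
    rw [Metric.mem_ball] at hy hz
    have hyz : dist y z < 2 * R / 3 := by
      have := dist_triangle_right y z x
      linarith
    have key : pathDistWith ρ y z ≤ C * edist y z := by
      have hlt : edist y z < ENNReal.ofReal (2 * R / 3) := by
        rw [edist_dist]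
        exact (ENNReal.ofReal_lt_ofReal_iff (by positivity)).2 hyz
      have step : ∀ L, edist y z < L → L < ENNReal.ofReal (2 * R / 3) →
          pathDistWith ρ y z ≤ C * L := by
        intro L hL hL2
        have h : pathDistWith (fun x y : M => edist x y) y z < L := by
          rw [← hintr y z]
          exact hL
        obtain ⟨a, b, c, hab, hc, ha, hb, hl⟩ := exists_curve_of_pathDistWith_lt h
        have hin : ∀ s ∈ Set.Icc a b, c s ∈ K n := by
          intro s hs
          apply hRn
          rw [Metric.mem_ball]
          have e1 : edist (c a) (c s) < ENNReal.ofReal (2 * R / 3) := by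
            refine lt_of_le_of_lt ?_ (hl.trans hL2)
            rw [lengthWith_eq_eVariationOn (id : M → M) (fun x y : M => edist x y)
              (fun _ _ => rfl) c hab]
            exact eVariationOn.edist_le (id ∘ c) ⟨le_rfl, hab⟩ hs
          rw [edist_dist, ENNReal.ofReal_lt_ofReal_iff (by positivity), ha] at e1
          have := dist_triangle_left (c s) x y
          linarith
        have h1 := lengthWith_le_mul ρ (fun x y : M => edist x y) C c (a := a) (b := b)
          fun s hs t ht => hC _ (hin s hs) _ (hin t ht)
        have h2 := pathDistWith_le ρ hab hc
        rw [ha, hb] at h2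
        exact (h2.trans h1).trans (mul_le_mul_right hl.le _)
      have ht : Filter.Tendsto (fun L : ℝ≥0∞ => (C : ℝ≥0∞) * L)
          (nhdsWithin (edist y z) (Set.Ioi (edist y z))) (nhds ((C : ℝ≥0∞) * edist y z)) :=
        ((ENNReal.continuous_const_mul ENNReal.coe_ne_top).tendsto _).mono_left
          nhdsWithin_le_nhds
      have : (nhdsWithin (edist y z) (Set.Ioi (edist y z))).NeBot := nhdsGT_neBot_of_exists_gt ⟨_, hlt⟩
      refine ge_of_tendsto ht ?_
      filter_upwards [Ioo_mem_nhdsGT hlt] with L hL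
      exact step L hL.1 hL.2
    have := ENNReal.toReal_mono (ENNReal.mul_ne_top ENNReal.coe_ne_top (edist_ne_top y z)) key
    rwa [ENNReal.toReal_mul, ← dist_edist, ENNReal.coe_toReal] at this
  have htop : ∀ s : Set M,
      IsOpen s ↔ ∀ x ∈ s, ∃ ε : ℝ, 0 < ε ∧ ∀ y, D' x y < ε → y ∈ s := by
    intro s
    rw [Metric.isOpen_iff]
    refine forall₂_congr fun x hx => ⟨?_, ?_⟩
    · rintro ⟨ε, hε, hs⟩
      refine ⟨ε, hε, fun y hy => hs ?_⟩
      rw [Metric.mem_ball, dist_comm]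
      exact (hdist x y).trans_lt hy
    · rintro ⟨ε, hε, hs⟩
      obtain ⟨r, hr, C, hC⟩ := hloc x
      refine ⟨min r (ε / (C + 1)), by positivity, fun y hy => hs y ?_⟩
      rw [Metric.mem_ball, lt_min_iff, lt_div_iff₀ (by positivity)] at hy
      have h1 := hC x (Metric.mem_ball_self hr) y hy.1
      rw [dist_comm x y] at h1
      have : 0 ≤ dist y x := dist_nonneg
      nlinarith [hy.2]
  refine ⟨D', hnn, fun x y => ⟨fun h => ?_, fun h => h ▸ hself x⟩, hcomm, htri, htop, ?_, ?_, ?_⟩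
  · exact dist_le_zero.1 ((hdist x y).trans h.le)
  · have : (fun x y : M => ENNReal.ofReal (D' x y)) = pathDistWith ρ := by
      funext x y
      exact hD' x y
    rw [this]
    exact isIntrinsic_pathDistWith F ρ hρ
  · intro x r
    obtain ⟨n, hn⟩ := hprop x r
    refine (K.isCompact n).of_isClosed_subset ?_ fun y hy => hn y ?_
    · rw [← isOpen_compl_iff, htop]
      intro y hy
      simp only [Set.mem_compl_iff, Set.mem_ofPred_eq, not_le] at hy
      refine ⟨D' x y - r, by linarith, fun z hz => ?_⟩
      simp only [Set.mem_compl_iff, Set.mem_ofPred_eq, not_le]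
      have := htri x z y
      rw [hcomm z y] at this
      linarith
    · refine (le_pathDistWith_self ρ x y).trans ?_
      rw [← hD']
      exact ENNReal.ofReal_le_ofReal hy
  · intro S hS
    obtain ⟨G, instG, g, hg⟩ := exists_pseudoMetric D' hself hcomm htri
    have hl : LocallyLipschitzOn S g := by
      apply LocallyLipschitz.locallyLipschitzOn
      intro x
      obtain ⟨r, hr, C, hC⟩ := hloc x
      refine ⟨C, Metric.ball x r, Metric.ball_mem_nhds x hr, ?_⟩
      refine LipschitzOnWith.of_dist_le_mul fun y hy z hz => ?_
      rw [hg]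
      exact hC y hy z hz
    obtain ⟨C, hC⟩ := hl.exists_lipschitzOnWith_of_compact hS
    refine ⟨1, max 1 C, one_pos, le_max_left _ _, fun x hx y hy => ⟨?_, ?_⟩⟩
    · rw [one_mul]
      exact hdist x y
    · have := hC.dist_le_mul x hx y hy
      rw [hg] at this
      exact this.trans (mul_le_mul_of_nonneg_right (le_max_right _ _) dist_nonneg)
end

section
/- Let (M,D) be a metric space whose metric D is intrinsic, and let (C_n)_{n≥1} be a sequence of compact subsets of M with C_n ⊆ C_{n+1} and ⋃_{n≥1} C_n = M, such that for every n ≥ 2 the quantity ε_n := D(C_{n-1}, M∖int(C_n)) is strictly positive. Let f : M → (0,∞) be a continuous function with f(x) ≥ 1/ε_n for all x ∈ C_n∖C_{n-1} and all n ≥ 2. Then for every n ≥ 2, every x ∈ C_1 and every y ∈ M∖C_n, the weighted metric satisfies D̂_f(x,y) ≥ n − 1. -/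
open scoped ENNReal

/-- The weighted metric `D̂_f(x,y)`: the infimum of the `f`-weighted lengths
`ℓ̃_f(c)` over all continuous curves `c` from `x` to `y`. -/
noncomputable def hatDist {M : Type*} [MetricSpace M] (f : M → ℝ) (x y : M) : ℝ≥0∞ :=
  pathDistWith (fun p q : M => ENNReal.ofReal (f p) * edist p q) x y

/-- The distance between two subsets of a metric space, as an extended real
(so that `inf ∅ = ∞`). -/
noncomputable def setEDist {M : Type*} [MetricSpace M] (A B : Set M) : ℝ≥0∞ :=
  ⨅ (x ∈ A) (y ∈ B), edist x y

/-- **Growth estimate in the proof of Theorem 2 of the paper.** Let `D` be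
intrinsic, let `C 0 ⊆ C 1 ⊆ …` be a compact exhaustion (here `C n` plays the
role of `C_{n+1}` of the paper), for `n ≥ 1` let
`ε_n := D(C (n-1), M ∖ int (C n))` be strictly positive, and let `f > 0` be
continuous with `f ≥ 1/ε_n` on `C n ∖ C (n-1)`.  Then for every `n ≥ 1`,
every `x ∈ C 0` and every `y ∉ C n` we have `D̂_f(x,y) ≥ n`
(i.e. `D̂(C_1, M ∖ C_n) ≥ n - 1` in the paper's numbering). -/
theorem hatDist_ge_of_exhaustion
    {M : Type*} [MetricSpace M]
    (hintr : IsIntrinsic (fun x y : M => edist x y))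
    (C : ℕ → Set M)
    (hcomp : ∀ n, IsCompact (C n))
    (hmono : ∀ n, C n ⊆ C (n + 1))
    (hunion : ⋃ n, C n = Set.univ)
    (hpos : ∀ n : ℕ, 1 ≤ n → 0 < setEDist (C (n - 1)) ((interior (C n))ᶜ))
    (f : M → ℝ) (hf : Continuous f) (hfpos : ∀ x, 0 < f x)
    (hfbd : ∀ n : ℕ, 1 ≤ n → ∀ x ∈ C n \ C (n - 1),
      (setEDist (C (n - 1)) ((interior (C n))ᶜ))⁻¹ ≤ ENNReal.ofReal (f x)) :
    ∀ n : ℕ, 1 ≤ n → ∀ x ∈ C 0, ∀ y ∉ C n, (n : ℝ≥0∞) ≤ hatDist f x y := by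
  intro n hn x hx y hy
  have hCm : Monotone C := monotone_nat_of_le_succ hmono
  unfold hatDist pathDistWith
  refine le_iInf fun a => le_iInf fun b => le_iInf fun c => le_iInf fun hab => le_iInf fun hc =>
    le_iInf fun hca => le_iInf fun hcb => ?_
  -- last time in `C k`
  have hlast : ∀ k, ∃ s, k ≤ n → (a ≤ s ∧ s < b ∧ c s ∈ C k ∧
      ∀ t, s < t → t ≤ b → c t ∉ C k) := by
    intro k
    by_cases hk : k ≤ n
    swap
    · exact ⟨0, fun h => absurd h hk⟩
    have hcl : IsClosed (Set.Icc a b ∩ c ⁻¹' C k) :=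
      hc.preimage_isClosed_of_isClosed isClosed_Icc (hcomp k).isClosed
    have hcpt : IsCompact (Set.Icc a b ∩ c ⁻¹' C k) :=
      isCompact_Icc.of_isClosed_subset hcl Set.inter_subset_left
    have hne : (Set.Icc a b ∩ c ⁻¹' C k).Nonempty :=
      ⟨a, ⟨le_refl a, hab⟩, by
        rw [Set.mem_preimage, hca]; exact hCm (Nat.zero_le k) hx⟩
    obtain ⟨s, ⟨hs1, hs2⟩, hs3⟩ := hcpt.exists_isGreatest hne
    refine ⟨s, fun _ => ⟨hs1.1, lt_of_le_of_ne hs1.2 ?_, hs2, ?_⟩⟩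
    · rintro rfl
      rw [Set.mem_preimage, hcb] at hs2
      exact hy (hCm hk hs2)
    · intro t hst htb hct
      exact absurd (hs3 ⟨⟨hs1.1.trans hst.le, htb⟩, hct⟩) (not_le.2 hst)
  choose s hs using hlast
  have hne : ∀ k, k ≤ n → (nhdsWithin (s k) (Set.Ioo (s k) b)).NeBot := by
    intro k hk
    rw [← mem_closure_iff_nhdsWithin_neBot, closure_Ioo (hs k hk).2.1.ne]
    exact ⟨le_rfl, (hs k hk).2.1.le⟩
  have hcont : ∀ k, k ≤ n →
      Filter.Tendsto c (nhdsWithin (s k) (Set.Ioo (s k) b)) (nhds (c (s k))) := by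
    intro k hk
    obtain ⟨h1, h2, -, -⟩ := hs k hk
    exact (hc (s k) ⟨h1, h2.le⟩).mono fun t ht => ⟨h1.trans ht.1.le, ht.2.le⟩
  have hout : ∀ k, k ≤ n → ∀ᶠ t in nhdsWithin (s k) (Set.Ioo (s k) b), c t ∉ C k := by
    intro k hk
    filter_upwards [self_mem_nhdsWithin] with t ht
    exact (hs k hk).2.2.2 t ht.1 ht.2.le
  have hnint : ∀ k, k ≤ n → c (s k) ∉ interior (C k) := by
    intro k hk hmem
    have := hne k hk
    have h1 := (hcont k hk).eventually (isOpen_interior.mem_nhds hmem)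
    obtain ⟨t, ht1, ht2⟩ := (h1.and (hout k hk)).exists
    exact ht2 (interior_subset ht1)
  have hint : ∀ k, C k ⊆ interior (C (k + 1)) := by
    intro k p hp
    by_contra hnot
    have h := hpos (k + 1) (by omega)
    have h2 : setEDist (C (k + 1 - 1)) ((interior (C (k + 1)))ᶜ) ≤ edist p p :=
      iInf₂_le_of_le p hp (iInf₂_le p hnot)
    rw [edist_self] at h2
    exact absurd h (not_lt.2 h2)
  have hstep : ∀ k, k < n →
      1 ≤ ENNReal.ofReal (f (c (s k))) * edist (c (s k)) (c (s (k + 1))) := by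
    intro k hk
    have := hne k hk.le
    have hmem := (hs k hk.le).2.2.1
    have hfb : (setEDist (C k) ((interior (C (k + 1)))ᶜ))⁻¹ ≤ ENNReal.ofReal (f (c (s k))) := by
      have ht : Filter.Tendsto (fun t => ENNReal.ofReal (f (c t)))
          (nhdsWithin (s k) (Set.Ioo (s k) b)) (nhds (ENNReal.ofReal (f (c (s k))))) :=
        ((ENNReal.continuous_ofReal.comp hf).tendsto (c (s k))).comp (hcont k hk.le)
      refine ge_of_tendsto ht ?_
      filter_upwards [hout k hk.le,
        (hcont k hk.le).eventually (isOpen_interior.mem_nhds (hint k hmem))] with t h1 h2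
      exact hfbd (k + 1) (by omega) (c t) ⟨interior_subset h2, h1⟩
    have hd : setEDist (C k) ((interior (C (k + 1)))ᶜ) ≤ edist (c (s k)) (c (s (k + 1))) :=
      iInf₂_le_of_le (c (s k)) hmem (iInf₂_le (c (s (k + 1))) (hnint (k + 1) hk))
    have h0 : setEDist (C k) ((interior (C (k + 1)))ᶜ) ≠ 0 := (hpos (k + 1) (by omega)).ne'
    have htop : setEDist (C k) ((interior (C (k + 1)))ᶜ) ≠ ⊤ :=
      ne_top_of_le_ne_top (edist_ne_top _ _) hd
    calc (1 : ℝ≥0∞) = (setEDist (C k) ((interior (C (k + 1)))ᶜ))⁻¹ *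
          setEDist (C k) ((interior (C (k + 1)))ᶜ) := (ENNReal.inv_mul_cancel h0 htop).symm
      _ ≤ _ := mul_le_mul' hfb hd
  have hsm : ∀ k, k < n → s k ≤ s (k + 1) := by
    intro k hk
    by_contra hlt
    exact (hs (k + 1) hk).2.2.2 (s k) (not_le.1 hlt) (hs k hk.le).2.1.le
      (hmono k (hs k hk.le).2.2.1)
  let τ : ℕ → ℝ := fun i => Nat.casesOn i a (fun j => if j ≤ n then s j else b)
  have hτ0 : τ 0 = a := rfl
  have hτs : ∀ j, j ≤ n → τ (j + 1) = s j := fun j hj => if_pos hj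
  have hτb : ∀ j, n < j → τ (j + 1) = b := fun j hj => if_neg (not_le.2 hj)
  have hτm : Monotone τ := by
    refine monotone_nat_of_le_succ fun i => ?_
    rcases i with _ | j
    · rw [hτ0, hτs 0 (Nat.zero_le n)]
      exact (hs 0 (Nat.zero_le n)).1
    · rcases lt_trichotomy j n with h | h | h
      · rw [hτs j h.le, hτs (j + 1) h]
        exact hsm j h
      · rw [hτs j h.le, hτb (j + 1) (by omega)]
        exact (hs j h.le).2.1.le
      · rw [hτb j h, hτb (j + 1) (by omega)]
  have hle : ∑ i : Fin (n + 2), (fun p q : M => ENNReal.ofReal (f p) * edist p q)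
      (c (τ i.castSucc)) (c (τ i.succ)) ≤
      lengthWith (fun p q : M => ENNReal.ofReal (f p) * edist p q) c a b := by
    unfold lengthWith
    refine le_iSup_of_le (n + 2) (le_iSup_of_le (fun i => τ i) (le_iSup_of_le ?_
      (le_iSup_of_le ?_ (le_iSup_of_le ?_ le_rfl))))
    · intro i j hij
      exact hτm hij
    · exact hτ0
    · exact hτb (n + 1) (by omega)
  refine le_trans ?_ hle
  have hsum : ∑ i : Fin (n + 2), (fun p q : M => ENNReal.ofReal (f p) * edist p q)
      (c (τ i.castSucc)) (c (τ i.succ)) = ∑ i ∈ Finset.range (n + 2),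
      ENNReal.ofReal (f (c (τ i))) * edist (c (τ i)) (c (τ (i + 1))) := by
    rw [Finset.sum_range]
    rfl
  rw [hsum, Finset.sum_range_succ, Finset.sum_range_succ']
  refine le_add_right (le_add_right ?_)
  calc (n : ℝ≥0∞) = ∑ i ∈ Finset.range n, 1 := by simp
    _ ≤ _ := Finset.sum_le_sum fun k hk => ?_
  have hk' := Finset.mem_range.1 hk
  rw [hτs k hk'.le, hτs (k + 1) hk']
  exact hstep k hk'
end

section
/- Let X be a set, X₋, X₊ ⊆ X with X₋ ∪ X₊ = X, and S := X₋ ∩ X₊. Let ≤₋ be a reflexive and transitive relation on X₋ and ≤₊ a reflexive and transitive relation on X₊ such that: (a) for all x,y ∈ S, x ≤₋ y if and only if x ≤₊ y; (b) for all y ∈ S and z ∈ X₋, y ≤₋ z implies z ∈ S; (c) for all x ∈ X₊ and y ∈ S, x ≤₊ y implies x ∈ S. Define the glued relation ≤_X on X by: x ≤_X y iff (x,y ∈ X₋ and x ≤₋ y) or (x,y ∈ X₊ and x ≤₊ y) or (x ∈ X₋, y ∈ X₊ and there exists g ∈ S with x ≤₋ g and g ≤₊ y). Then ≤_X is reflexive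 and transitive on X. -/
/-- The glued causal relation on `X = X₋ ∪ X₊`: `x ≤_X y` iff both points lie in
`X₋` and `x ≤₋ y`, or both lie in `X₊` and `x ≤₊ y`, or `x ∈ X₋`, `y ∈ X₊` and
there is `g ∈ S` with `x ≤₋ g` and `g ≤₊ y`. -/
def gluedLe {α : Type*} (Xm Xp S : Set α) (lem lep : α → α → Prop) (x y : α) : Prop :=
  (x ∈ Xm ∧ y ∈ Xm ∧ lem x y) ∨ (x ∈ Xp ∧ y ∈ Xp ∧ lep x y) ∨
    (x ∈ Xm ∧ y ∈ Xp ∧ ∃ g ∈ S, lem x g ∧ lep g y)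

/-- **Order-theoretic core of Theorem 6 of the paper.** Gluing two preordered
pieces `X₋`, `X₊` covering `X` along `S = X₋ ∩ X₊`, where the two relations
agree on `S`, `S` is future-closed in `X₋` and past-closed in `X₊`, yields a
reflexive and transitive glued relation on `X`. -/
theorem gluedLe_refl_trans {α : Type*} (Xm Xp : Set α)
    (hcover : Xm ∪ Xp = Set.univ)
    (lem lep : α → α → Prop)
    (hreflm : ∀ x ∈ Xm, lem x x)
    (htransm : ∀ x ∈ Xm, ∀ y ∈ Xm, ∀ z ∈ Xm, lem x y → lem y z → lem x z)
    (hreflp : ∀ x ∈ Xp, lep x x)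
    (htransp : ∀ x ∈ Xp, ∀ y ∈ Xp, ∀ z ∈ Xp, lep x y → lep y z → lep x z)
    -- (a) the two relations agree on `S = X₋ ∩ X₊`
    (ha : ∀ x ∈ Xm ∩ Xp, ∀ y ∈ Xm ∩ Xp, (lem x y ↔ lep x y))
    -- (b) anything in `X₋` above a point of `S` lies in `S`
    (hb : ∀ y ∈ Xm ∩ Xp, ∀ z ∈ Xm, lem y z → z ∈ Xm ∩ Xp)
    -- (c) anything in `X₊` below a point of `S` lies in `S`
    (hc : ∀ x ∈ Xp, ∀ y ∈ Xm ∩ Xp, lep x y → x ∈ Xm ∩ Xp) :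
    (∀ x : α, gluedLe Xm Xp (Xm ∩ Xp) lem lep x x) ∧
      (∀ x y z : α, gluedLe Xm Xp (Xm ∩ Xp) lem lep x y →
        gluedLe Xm Xp (Xm ∩ Xp) lem lep y z →
        gluedLe Xm Xp (Xm ∩ Xp) lem lep x z) := by
  constructor
  · intro x
    have hx : x ∈ Xm ∪ Xp := by rw [hcover]; trivial
    rcases hx with h | h
    · exact Or.inl ⟨h, h, hreflm x h⟩
    · exact Or.inr (Or.inl ⟨h, h, hreflp x h⟩)
  · rintro x y z (⟨hx, hy, h⟩ | ⟨hx, hy, h⟩ | ⟨hx, hy, g, hg, h, k⟩)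
      (⟨hy', hz, h'⟩ | ⟨hy', hz, h'⟩ | ⟨hy', hz, g', hg', h', k'⟩)
    · exact Or.inl ⟨hx, hz, htransm x hx y hy z hz h h'⟩
    · exact Or.inr (Or.inr ⟨hx, hz, y, ⟨hy, hy'⟩, h, h'⟩)
    · exact Or.inr (Or.inr ⟨hx, hz, g', hg', htransm x hx y hy g' hg'.1 h h', k'⟩)
    · have hzS := hb y ⟨hy', hy⟩ z hz h'
      exact Or.inr (Or.inl ⟨hx, hzS.2,
        htransp x hx y hy z hzS.2 h ((ha y ⟨hy', hy⟩ z hzS).1 h')⟩)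
    · exact Or.inr (Or.inl ⟨hx, hz, htransp x hx y hy z hz h h'⟩)
    · have e := (ha y ⟨hy', hy⟩ g' hg').1 h'
      exact Or.inr (Or.inl ⟨hx, hz, htransp x hx y hy z hz h
        (htransp y hy g' hg'.2 z hz e k')⟩)
    · have hzS := hb y ⟨hy', hy⟩ z hz h'
      exact Or.inr (Or.inr ⟨hx, hzS.2, g, hg, h,
        htransp g hg.2 y hy z hzS.2 k ((ha y ⟨hy', hy⟩ z hzS).1 h')⟩)
    · exact Or.inr (Or.inr ⟨hx, hz, g, hg, h, htransp g hg.2 y hy z hz k h'⟩)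
    · have e := (ha y ⟨hy', hy⟩ g' hg').1 h'
      exact Or.inr (Or.inr ⟨hx, hz, g, hg, h, htransp g hg.2 y hy z hz k
        (htransp y hy g' hg'.2 z hz e k')⟩)
end

section
/- Let X be a set, X₋, X₊ ⊆ X with X₋ ∪ X₊ = X, and S := X₋ ∩ X₊, with relations ≤₋ on X₋ and ≤₊ on X₊ that are reflexive and transitive, agree on S × S, and satisfy: for all y ∈ S and z ∈ X₋, y ≤₋ z implies z ∈ S; and for all x ∈ X₊ and y ∈ S, x ≤₊ y implies x ∈ S. Let ≤_X be the glued relation (x ≤_X y iff x,y ∈ X₋ and x ≤₋ y, or x,y ∈ X₊ and x ≤₊ y, or x ∈ X₋, y ∈ X₊ and there exists g ∈ S with x ≤₋ g and g ≤₊ y). Let τ₋ : X₋ × X₋ → [0,∞] and τ₊ : X₊ × X₊ → [0,∞] agree on S × S and each satisfy the reverse triangle inequality with respect to ≤₋ resp. ≤₊ (i.e., τ(x,z) ≥ τ(x,y) + τ(y,z) whenever x ≤ y ≤ z). Define τ : X × X → [0,∞] by: τ(p,q) := τ₋(p,q) if p,q ∈ X₋; τ(p,q) := τ₊(p,q) if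 p,q ∈ X₊; τ(p,q) := sup{τ₋(p,g) + τ₊(g,q) : g ∈ S, p ≤₋ g, g ≤₊ q} (with sup over the empty set equal to 0) if p ∈ X₋∖S and q ∈ X₊∖S; and τ(p,q) := 0 if p ∈ X₊∖S and q ∈ X₋∖S. Then τ satisfies the reverse triangle inequality with respect to ≤_X: for all x,y,z ∈ X with x ≤_X y ≤_X z one has τ(x,z) ≥ τ(x,y) + τ(y,z). Moreover, if additionally τ₋(p,q) > 0 implies p ≤₋ q and τ₊(p,q) > 0 implies p ≤₊ q, then τ(p,q) > 0 implies p ≤_X q. -/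
open scoped ENNReal

open Classical in
/-- The glued time-separation function: `τ₋` on `X₋ × X₋`, `τ₊` on `X₊ × X₊`,
`sup { τ₋(p,g) + τ₊(g,q) : g ∈ S, p ≤₋ g ≤₊ q }` for `p ∈ X₋ ∖ S`,
`q ∈ X₊ ∖ S` (with `sup ∅ = 0`), and `0` for `p ∈ X₊ ∖ S`, `q ∈ X₋ ∖ S`. -/
noncomputable def gluedTau {α : Type*} (Xm Xp S : Set α) (lem lep : α → α → Prop)
    (τm τp : α → α → ℝ≥0∞) (p q : α) : ℝ≥0∞ :=
  if p ∈ Xm ∧ q ∈ Xm then τm p q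
  else if p ∈ Xp ∧ q ∈ Xp then τp p q
  else if p ∈ Xm ∧ q ∈ Xp then
    ⨆ (g : α) (_ : g ∈ S) (_ : lem p g) (_ : lep g q), τm p g + τp g q
  else 0

/-- Adding a constant to a nonempty constrained supremum. -/
theorem add_sup_le_aux {α : Type*} (P : α → Prop) (f : α → ℝ≥0∞) (c d T : ℝ≥0∞)
    (hT : ∀ b, (∀ g, P g → f g ≤ b) → T ≤ b) (hne : ∃ g, P g)
    (h : ∀ g, P g → c + f g ≤ d) : c + T ≤ d := by
  obtain ⟨g₀, hg₀⟩ := hne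
  have hcd : c ≤ d := le_trans le_self_add (h g₀ hg₀)
  by_cases hc : c = ⊤
  · subst hc
    simpa using hcd
  · have : T ≤ d - c := hT _ fun g hg => ENNReal.le_sub_of_add_le_left hc (h g hg)
    calc c + T ≤ c + (d - c) := by gcongr
      _ = d := add_tsub_cancel_of_le hcd

/-- **Core of the verification of P.1 and P.2 in the proof of Theorem 6 of the
paper.** The glued time-separation function of two pieces glued along a common
Cauchy boundary `S = X₋ ∩ X₊` satisfies the reverse triangle inequality with
respect to the glued causal relation; moreover, if in each piece positive time
separation implies causal relation, the same holds for the glued data. -/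
theorem gluedTau_reverse_triangle {α : Type*} (Xm Xp : Set α)
    (hcover : Xm ∪ Xp = Set.univ)
    (lem lep : α → α → Prop)
    (hreflm : ∀ x ∈ Xm, lem x x)
    (htransm : ∀ x ∈ Xm, ∀ y ∈ Xm, ∀ z ∈ Xm, lem x y → lem y z → lem x z)
    (hreflp : ∀ x ∈ Xp, lep x x)
    (htransp : ∀ x ∈ Xp, ∀ y ∈ Xp, ∀ z ∈ Xp, lep x y → lep y z → lep x z)
    -- the two causal relations agree on `S = X₋ ∩ X₊`
    (ha : ∀ x ∈ Xm ∩ Xp, ∀ y ∈ Xm ∩ Xp, (lem x y ↔ lep x y))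
    -- anything in `X₋` above a point of `S` lies in `S`
    (hb : ∀ y ∈ Xm ∩ Xp, ∀ z ∈ Xm, lem y z → z ∈ Xm ∩ Xp)
    -- anything in `X₊` below a point of `S` lies in `S`
    (hc : ∀ x ∈ Xp, ∀ y ∈ Xm ∩ Xp, lep x y → x ∈ Xm ∩ Xp)
    (τm τp : α → α → ℝ≥0∞)
    -- the two time-separation functions agree on `S = X₋ ∩ X₊`
    (hτagree : ∀ x ∈ Xm ∩ Xp, ∀ y ∈ Xm ∩ Xp, τm x y = τp x y)
    -- reverse triangle inequality in each piece
    (hτm : ∀ x ∈ Xm, ∀ y ∈ Xm, ∀ z ∈ Xm, lem x y → lem y z →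
      τm x y + τm y z ≤ τm x z)
    (hτp : ∀ x ∈ Xp, ∀ y ∈ Xp, ∀ z ∈ Xp, lep x y → lep y z →
      τp x y + τp y z ≤ τp x z) :
    -- the glued `τ` satisfies the reverse triangle inequality w.r.t. `≤_X`
    (∀ x y z : α, gluedLe Xm Xp (Xm ∩ Xp) lem lep x y →
      gluedLe Xm Xp (Xm ∩ Xp) lem lep y z →
      gluedTau Xm Xp (Xm ∩ Xp) lem lep τm τp x y
          + gluedTau Xm Xp (Xm ∩ Xp) lem lep τm τp y z
        ≤ gluedTau Xm Xp (Xm ∩ Xp) lem lep τm τp x z) ∧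
      -- moreover, positivity of the glued `τ` implies the glued causal relation
      ((∀ p ∈ Xm, ∀ q ∈ Xm, 0 < τm p q → lem p q) →
        (∀ p ∈ Xp, ∀ q ∈ Xp, 0 < τp p q → lep p q) →
        ∀ p q : α, 0 < gluedTau Xm Xp (Xm ∩ Xp) lem lep τm τp p q →
          gluedLe Xm Xp (Xm ∩ Xp) lem lep p q) := by
  have hmem : ∀ x, x ∈ Xm ∨ x ∈ Xp := fun x => by
    have : x ∈ Xm ∪ Xp := hcover ▸ Set.mem_univ x
    exact this
  -- the glued relation on the pieces
  have Lm : ∀ x y, x ∈ Xm → y ∈ Xm → gluedLe Xm Xp (Xm ∩ Xp) lem lep x y → lem x y := by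
    rintro x y hx hy (⟨_, _, h⟩ | ⟨hx', hy', h⟩ | ⟨_, hy', g, hg, h1, h2⟩)
    · exact h
    · exact (ha x ⟨hx, hx'⟩ y ⟨hy, hy'⟩).2 h
    · exact htransm x hx g hg.1 y hy h1 ((ha g hg y ⟨hy, hy'⟩).2 h2)
  have Lp : ∀ x y, x ∈ Xp → y ∈ Xp → gluedLe Xm Xp (Xm ∩ Xp) lem lep x y → lep x y := by
    rintro x y hx hy (⟨hx', hy', h⟩ | ⟨_, _, h⟩ | ⟨hx', _, g, hg, h1, h2⟩)
    · exact (ha x ⟨hx', hx⟩ y ⟨hy', hy⟩).1 h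
    · exact h
    · exact htransp x hx g hg.2 y hy ((ha x ⟨hx', hx⟩ g hg).1 h1) h2
  have Lmp : ∀ x y, x ∈ Xm → y ∈ Xp → gluedLe Xm Xp (Xm ∩ Xp) lem lep x y →
      ∃ g, g ∈ Xm ∩ Xp ∧ lem x g ∧ lep g y := by
    rintro x y hx hy (⟨_, hy', h⟩ | ⟨hx', _, h⟩ | ⟨_, _, g, hg, h1, h2⟩)
    · exact ⟨y, ⟨hy', hy⟩, h, hreflp y hy⟩
    · exact ⟨x, ⟨hx, hx'⟩, hreflm x hx, h⟩
    · exact ⟨g, hg, h1, h2⟩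
  have Np : ∀ x y, x ∈ Xp → gluedLe Xm Xp (Xm ∩ Xp) lem lep x y → y ∈ Xp := by
    rintro x y hx (⟨hx', hy', h⟩ | ⟨_, hy, _⟩ | ⟨_, hy, _⟩)
    · exact (hb x ⟨hx', hx⟩ y hy' h).2
    · exact hy
    · exact hy
  have Nm : ∀ x y, y ∈ Xm → gluedLe Xm Xp (Xm ∩ Xp) lem lep x y → x ∈ Xm := by
    rintro x y hy (⟨hx, _⟩ | ⟨hx, hy', h⟩ | ⟨hx, _⟩)
    · exact hx
    · exact (hc x hx y ⟨hy, hy'⟩ h).1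
    · exact hx
  -- the glued time separation on the pieces
  have Tm : ∀ x y, x ∈ Xm → y ∈ Xm →
      gluedTau Xm Xp (Xm ∩ Xp) lem lep τm τp x y = τm x y := by
    intro x y hx hy
    simp [gluedTau, hx, hy]
  have Tp : ∀ x y, x ∈ Xp → y ∈ Xp →
      gluedTau Xm Xp (Xm ∩ Xp) lem lep τm τp x y = τp x y := by
    intro x y hx hy
    by_cases h : x ∈ Xm ∧ y ∈ Xm
    · rw [Tm x y h.1 h.2]
      exact hτagree x ⟨h.1, hx⟩ y ⟨h.2, hy⟩
    · unfold gluedTau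
      rw [if_neg h, if_pos ⟨hx, hy⟩]
  have Tmp : ∀ x y, x ∈ Xm → y ∈ Xp → ¬ y ∈ Xm → ¬ x ∈ Xp →
      gluedTau Xm Xp (Xm ∩ Xp) lem lep τm τp x y =
      ⨆ (g : α) (_ : g ∈ Xm ∩ Xp) (_ : lem x g) (_ : lep g y), τm x g + τp g y := by
    intro x y hx hy hy' hx'
    unfold gluedTau
    rw [if_neg (fun h => hy' h.2), if_neg (fun h => hx' h.1), if_pos ⟨hx, hy⟩]
  have Tge : ∀ x y g, x ∈ Xm → y ∈ Xp → g ∈ Xm ∩ Xp → lem x g → lep g y →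
      τm x g + τp g y ≤ gluedTau Xm Xp (Xm ∩ Xp) lem lep τm τp x y := by
    intro x y g hx hy hg h1 h2
    by_cases hy' : y ∈ Xm
    · rw [Tm x y hx hy', ← hτagree g hg y ⟨hy', hy⟩]
      exact hτm x hx g hg.1 y hy' h1 ((ha g hg y ⟨hy', hy⟩).2 h2)
    by_cases hx' : x ∈ Xp
    · rw [Tp x y hx' hy, hτagree x ⟨hx, hx'⟩ g hg]
      exact hτp x hx' g hg.2 y hy ((ha x ⟨hx, hx'⟩ g hg).1 h1) h2
    rw [Tmp x y hx hy hy' hx']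
    exact le_iSup_of_le g (le_iSup_of_le hg (le_iSup_of_le h1 (le_iSup_of_le h2 le_rfl)))
  have Tle : ∀ x y, x ∈ Xm → y ∈ Xp → ¬ y ∈ Xm → ¬ x ∈ Xp → ∀ b,
      (∀ g, (g ∈ Xm ∩ Xp ∧ lem x g ∧ lep g y) → τm x g + τp g y ≤ b) →
      gluedTau Xm Xp (Xm ∩ Xp) lem lep τm τp x y ≤ b := by
    intro x y hx hy hy' hx' b h
    rw [Tmp x y hx hy hy' hx']
    exact iSup_le fun g => iSup_le fun hg => iSup_le fun h1 => iSup_le fun h2 =>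
      h g ⟨hg, h1, h2⟩
  refine ⟨?_, ?_⟩
  · intro x y z hxy hyz
    by_cases hz : z ∈ Xm
    · have hy := Nm y z hz hyz
      have hx := Nm x y hy hxy
      rw [Tm x y hx hy, Tm y z hy hz, Tm x z hx hz]
      exact hτm x hx y hy z hz (Lm x y hx hy hxy) (Lm y z hy hz hyz)
    have hzp : z ∈ Xp := (hmem z).resolve_left hz
    by_cases hx : x ∈ Xp
    · have hy := Np x y hx hxy
      rw [Tp x y hx hy, Tp y z hy hzp, Tp x z hx hzp]
      exact hτp x hx y hy z hzp (Lp x y hx hy hxy) (Lp y z hy hzp hyz)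
    have hxm : x ∈ Xm := (hmem x).resolve_right hx
    by_cases hym : y ∈ Xm
    · have hxy' := Lm x y hxm hym hxy
      by_cases hyp : y ∈ Xp
      · rw [Tm x y hxm hym, Tp y z hyp hzp]
        exact Tge x z y hxm hzp ⟨hym, hyp⟩ hxy' (Lp y z hyp hzp hyz)
      · refine add_sup_le_aux _ _ _ _ _ (Tle y z hym hzp hz hyp) (Lmp y z hym hzp hyz) ?_
        rintro g ⟨hg, h1, h2⟩
        rw [Tm x y hxm hym, ← add_assoc]
        refine le_trans ?_ (Tge x z g hxm hzp hg (htransm x hxm y hym g hg.1 hxy' h1) h2)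
        gcongr
        exact hτm x hxm y hym g hg.1 hxy' h1
    · have hyp : y ∈ Xp := (hmem y).resolve_left hym
      have hyz' := Lp y z hyp hzp hyz
      rw [add_comm]
      refine add_sup_le_aux _ _ _ _ _ (Tle x y hxm hyp hym hx) (Lmp x y hxm hyp hxy) ?_
      rintro g ⟨hg, h1, h2⟩
      rw [Tp y z hyp hzp, add_comm, add_assoc]
      refine le_trans ?_ (Tge x z g hxm hzp hg h1 (htransp g hg.2 y hyp z hzp h2 hyz'))
      gcongr
      exact hτp g hg.2 y hyp z hzp h2 hyz'
  · intro hpm hpp p q hpos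
    by_cases hm : p ∈ Xm ∧ q ∈ Xm
    · rw [Tm p q hm.1 hm.2] at hpos
      exact Or.inl ⟨hm.1, hm.2, hpm p hm.1 q hm.2 hpos⟩
    by_cases hp : p ∈ Xp ∧ q ∈ Xp
    · rw [Tp p q hp.1 hp.2] at hpos
      exact Or.inr (Or.inl ⟨hp.1, hp.2, hpp p hp.1 q hp.2 hpos⟩)
    by_cases hmp : p ∈ Xm ∧ q ∈ Xp
    · refine Or.inr (Or.inr ⟨hmp.1, hmp.2, ?_⟩)
      by_contra hne
      refine absurd hpos (not_lt.2 ?_)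
      refine Tle p q hmp.1 hmp.2 (fun h => hm ⟨hmp.1, h⟩) (fun h => hp ⟨h, hmp.2⟩) 0 ?_
      rintro g ⟨hg, h1, h2⟩
      exact absurd ⟨g, hg, h1, h2⟩ hne
    · unfold gluedTau at hpos
      rw [if_neg hm, if_neg hp, if_neg hmp] at hpos
      exact absurd hpos (lt_irrefl _)
end
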